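/- arXiv:1402.2500 — 2 statements merged into one kernel-verified Lean document; each statement's English description precedes it below -/
import Mathlib

section
/- Let (W,T) be a dual Coxeter system of finite rank m and let c = s1⋯sn be a parabolic Coxeter element (so s1,…,sn are the first n elements of some simple system for (W,T)). Then the Hurwitz action of the braid group B_n on Red_T(c) is transitive: for every tuple (t1,…,tn) ∈ T^n with c = t1⋯tn there exists a braid b ∈ B_n such that b·(t1,…,tn) = (s1,…,sn). -/
/-- The Hurwitz move `σᵢ` on tuples of group elements (represented as lists):
`(t₁, …, a, b, …, tₙ) ↦ (t₁, …, a b a, a, …, tₙ)` (recall that reflections are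
involutions, so `a b a = a b a⁻¹`). -/
def HurwitzMove {W : Type*} [Group W] (l l' : List W) : Prop :=
  ∃ (l₁ l₂ : List W) (a b : W),
    l = l₁ ++ [a, b] ++ l₂ ∧ l' = l₁ ++ [a * b * a, a] ++ l₂

/-!
Among the lists in the Hurwitz orbit of a reduced factorization, choose one whose partial products
have minimal total length. Suppose that the length of the partial products had a peak, between two
consecutive reflections `a ≠ b`. By minimality, no Hurwitz moves on this pair, which run through the
reflections of the dihedral group generated by `a` and `b`, lower the peak; this forces any two of
these reflections to be right inversions of one another, which is impossible. So the lengths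
increase all the way, and the last reflection `t` is an inversion of the product. If the product is
a word in distinct simple generators, the strong exchange property deletes one letter of this word;
by induction the first factors can be moved to the shortened word, and sliding `t` back into place
restores the deleted letter. The induction starts since a nonempty word in distinct simple
generators is nontrivial, as its action on a fundamental weight shows.

This is the argument of Baumeister, Dyer, Stump and Wegener.
-/

section ContragredientRepresentation

open Module Polynomial Polynomial.Chebyshev Real

theorem reflection_mul_reflection_sq_of_apply_eq_zero {R V : Type*} [CommRing R] [AddCommGroup V]
    [Module R V] {x y : V} {f g : Dual R V} (hf : f x = 2) (hg : g y = 2)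
    (hfy : f y = 0) (hgx : g x = 0) : (reflection hf * reflection hg) ^ 2 = 1 := by
  ext z
  simp only [pow_two, LinearEquiv.mul_apply, reflection_apply, map_sub, map_smul, hf, hg, hfy, hgx,
    LinearEquiv.coe_one, id_eq]
  module

theorem eval_chebyshevS_sub_one_eq_zero {k : ℕ} {θ : ℝ} (hsin : sin θ ≠ 0) (hθ : k * θ = π) :
    (S ℝ (k - 1)).eval (2 * cos θ) = 0 := by
  refine (mul_eq_zero.1 ?_).resolve_right hsin
  rw [S_two_mul_real_cos, Int.cast_sub, Int.cast_natCast, Int.cast_one, sub_add_cancel, hθ, sin_pi]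

theorem eval_chebyshevS_add_eval_chebyshevS_eq_zero {k : ℕ} {θ : ℝ} (hsin : sin θ ≠ 0)
    (hθ : (2 * k + 1) * θ = 2 * π) :
    (S ℝ k).eval (2 * cos θ) + (S ℝ (k - 1)).eval (2 * cos θ) = 0 := by
  refine (mul_eq_zero.1 ?_).resolve_right hsin
  have hangle : (k : ℝ) * θ = 2 * π - (k + 1) * θ := by linear_combination hθ
  rw [add_mul, S_two_mul_real_cos, S_two_mul_real_cos, Int.cast_sub, Int.cast_natCast,
    Int.cast_one, sub_add_cancel, hangle, sin_two_pi_sub, add_neg_cancel]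

theorem reflection_mul_reflection_pow_eq_one {V : Type*} [AddCommGroup V] [Module ℝ V] {x y : V}
    {f g : Dual ℝ V} {m : ℕ} (hm : 3 ≤ m) (hf : f x = 2) (hg : g y = 2)
    (hfg : f y * g x = 4 * cos (π / m) ^ 2) : (reflection hf * reflection hg) ^ m = 1 := by
  set θ : ℝ := 2 * (π / m) with hθ
  have hmpos : (0 : ℝ) < m := by positivity
  have hmθ : m * θ = 2 * π := by rw [hθ]; field_simp
  have hsin : sin θ ≠ 0 := by
    refine (sin_pos_of_pos_of_lt_pi (by positivity) ?_).ne'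
    have : (3 : ℝ) ≤ m := by exact_mod_cast hm
    nlinarith [pi_pos]
  have hcos : 2 * cos θ = f y * g x - 2 := by rw [hfg, hθ, cos_two_mul]; ring
  ext z
  refine (reflection_mul_reflection_pow_apply hf hg m z _ hcos).trans ?_
  obtain ⟨k, rfl | rfl⟩ := Nat.even_or_odd' m
  · have hS := eval_chebyshevS_sub_one_eq_zero (k := k) hsin (by push_cast at hmθ; linarith)
    rw [show (((2 * k : ℕ) : ℤ) - 2) / 2 = k - 1 by lia,
      show (((2 * k : ℕ) : ℤ) - 1) / 2 = k - 1 by lia, hS]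
    simp
  · have hS := eval_chebyshevS_add_eval_chebyshevS_eq_zero (k := k) hsin
      (by push_cast at hmθ; exact hmθ)
    rw [show (((2 * k + 1 : ℕ) : ℤ) - 2) / 2 = k - 1 by lia,
      show (((2 * k + 1 : ℕ) : ℤ) - 1) / 2 = k by lia,
      show (((2 * k + 1 : ℕ) : ℤ) - 3) / 2 = k - 1 by lia,
      show ((2 * k + 1 : ℕ) : ℤ) / 2 = k by lia, hS]
    simp

variable {B W : Type*} [Group W] {M : CoxeterMatrix B}

/-- The row of the Cartan matrix `-2 cos (π / M i j)` indexed by `i`. The junk value `π / 0 = 0`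
makes the entry `-2` when `M i j = 0`, which encodes `m = ∞`. -/
noncomputable def cartanRow (M : CoxeterMatrix B) (i : B) : B → ℝ :=
  fun j => -2 * cos (π / M i j)

theorem proj_cartanRow_self (M : CoxeterMatrix B) (i : B) :
    (LinearMap.proj i : Dual ℝ (B → ℝ)) (cartanRow M i) = 2 := by
  simp [cartanRow]

/-- The simple reflections of the contragredient geometric representation of a Coxeter group,
in the coordinates given by the fundamental weights: the `i`-th one subtracts from `v` the
multiple `v i` of the `i`-th row of the Cartan matrix. -/
noncomputable def contragredientReflection (M : CoxeterMatrix B) (i : B) :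
    (B → ℝ) ≃ₗ[ℝ] (B → ℝ) :=
  reflection (proj_cartanRow_self M i)

theorem contragredientReflection_apply (i : B) (v : B → ℝ) :
    contragredientReflection M i v = v - v i • cartanRow M i :=
  reflection_apply _ _

theorem isLiftable_contragredientReflection (M : CoxeterMatrix B) :
    M.IsLiftable (contragredientReflection M) := by
  intro i j
  have hsymm : M j i = M i j := M.symmetric j i
  obtain rfl | hij := eq_or_ne i j
  · ext1 v
    simpa using! involutive_reflection (proj_cartanRow_self M i) v
  obtain h0 | h2 | h3 : M i j = 0 ∨ M i j = 2 ∨ 3 ≤ M i j := by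
    have := M.off_diagonal i j hij
    lia
  · rw [h0, pow_zero]
  · rw [h2]
    exact reflection_mul_reflection_sq_of_apply_eq_zero
      (proj_cartanRow_self M i) (proj_cartanRow_self M j)
      (by simp [cartanRow, hsymm, h2]) (by simp [cartanRow, h2])
  · refine reflection_mul_reflection_pow_eq_one h3
      (proj_cartanRow_self M i) (proj_cartanRow_self M j) ?_
    simp only [LinearMap.proj_apply, cartanRow, hsymm]
    ring

theorem wordProd_ne_one_of_nodup (cs : CoxeterSystem M W) {ω : List B} (hω : ω.Nodup)
    (hne : ω ≠ []) : cs.wordProd ω ≠ 1 := by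
  classical
  obtain ⟨i, ω, rfl⟩ := List.exists_cons_of_ne_nil hne
  set ρ := cs.lift ⟨_, isLiftable_contragredientReflection M⟩
  have hρ (j : B) (v : B → ℝ) : ρ (cs.simple j) v = v - v j • cartanRow M j := by
    rw [cs.lift_apply_simple, contragredientReflection_apply]
  -- The fundamental weight of `i` is fixed by every simple reflection except the `i`-th.
  set ϖ : B → ℝ := Pi.single i 1
  have hfix (ω : List B) (hi : i ∉ ω) : ρ (cs.wordProd ω) ϖ = ϖ := by
    induction ω with
    | nil => simp
    | cons j ω ih =>
      rw [List.mem_cons, not_or] at hi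
      simp [cs.wordProd_cons, ih hi.2, hρ, ϖ, Ne.symm hi.1]
  intro h
  have hmove : ϖ - cartanRow M i = ϖ := by
    have h1 : ρ (cs.wordProd (i :: ω)) ϖ = ϖ := by simp [h]
    rwa [cs.wordProd_cons, map_mul, LinearEquiv.mul_apply, hfix ω (List.nodup_cons.1 hω).1, hρ,
      show ϖ i = 1 from Pi.single_eq_same _ _, one_smul] at h1
  simpa [cartanRow] using congrFun hmove i

end ContragredientRepresentation

section ReflectionCocycle

open CoxeterSystem List

variable {B W : Type*} [Group W] {M : CoxeterMatrix B} (cs : CoxeterSystem M W)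

theorem prod_map_reverse_alternatingWord {G : Type*} [Monoid G] (f : B → G) (i j : B) (m : ℕ) :
    ((alternatingWord j i (2 * m)).reverse.map f).prod = (f i * f j) ^ m := by
  induction m with
  | zero => simp [alternatingWord]
  | succ m ih =>
    rw [Nat.mul_succ, alternatingWord_succ, alternatingWord_succ]
    simp [pow_succ', mul_assoc, ← ih]

theorem leftInvSeq_alternatingWord (i j : B) (m : ℕ) :
    cs.leftInvSeq (alternatingWord i j (2 * m)) =
      (range (2 * m)).map fun k => cs.wordProd (alternatingWord j i (2 * k + 1)) :=
  ext_getElem (by simp) fun k _ hk => by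
    rw [cs.getElem_leftInvSeq_alternatingWord _ _ _ _ (by simpa using hk)]
    simp

theorem wordProd_alternatingWord_add_two_mul (i j : B) (k : ℕ) :
    cs.wordProd (alternatingWord j i (2 * (M i j + k) + 1)) =
      cs.wordProd (alternatingWord j i (2 * k + 1)) := by
  rw [cs.prod_alternatingWord_eq_mul_pow, cs.prod_alternatingWord_eq_mul_pow,
    show (2 * (M i j + k) + 1) / 2 = M i j + k by lia, show (2 * k + 1) / 2 = k by lia, pow_add,
    cs.simple_mul_simple_pow', one_mul, if_neg (by simp), if_neg (by simp)]

-- The `2 M i j` reflections attached to the braid relation are `M i j` ones, each listed twice.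
theorem even_count_leftInvSeq_alternatingWord [DecidableEq W] (i j : B) (t : W) :
    Even ((cs.leftInvSeq (alternatingWord i j (2 * M i j))).count t) := by
  rw [leftInvSeq_alternatingWord, two_mul, range_add, map_append, map_map]
  simp only [Function.comp_def, wordProd_alternatingWord_add_two_mul, count_append]
  exact .add_self _

open Classical in
/-- The action of the simple reflection `i` on signed reflections: conjugation, with a change of
sign precisely at `cs.simple i` itself. Pairs in `W × ZMod 2` whose first
entry is not a reflection are allowed. -/
noncomputable def signedConj (i : B) : Function.End (W × ZMod 2) :=
  fun p => (MulAut.conj (cs.simple i) p.1, p.2 + if p.1 = cs.simple i then 1 else 0)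

theorem signedConj_smul [DecidableEq W] (i : B) (t : W) (ε : ZMod 2) :
    signedConj cs i • (t, ε) =
      (MulAut.conj (cs.simple i) t, ε + if t = cs.simple i then 1 else 0) := by
  simp only [Function.End.smul_def, signedConj]
  congr!

theorem prod_map_signedConj_smul [DecidableEq W] (ω : List B) (t : W) (ε : ZMod 2) :
    (ω.map (signedConj cs)).prod • (t, ε) =
      (MulAut.conj (cs.wordProd ω) t, ε + (cs.rightInvSeq ω).count t) := by
  induction ω with
  | nil => simp
  | cons i ω ih =>
    have hiff : MulAut.conj (cs.wordProd ω) t = cs.simple i ↔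
        (cs.wordProd ω)⁻¹ * cs.simple i * cs.wordProd ω = t := by
      rw [MulAut.conj_apply, mul_inv_eq_iff_eq_mul, mul_assoc, inv_mul_eq_iff_eq_mul, eq_comm]
    rw [map_cons, prod_cons, mul_smul, ih, signedConj_smul, cs.wordProd_cons, map_mul,
      MulAut.mul_apply, rightInvSeq, count_cons, if_congr hiff rfl rfl, add_assoc]
    simp

theorem isLiftable_signedConj : M.IsLiftable (signedConj cs) := by
  classical
  intro i j
  refine FaithfulSMul.eq_of_smul_eq_smul fun p : W × ZMod 2 => ?_
  have heven := even_count_leftInvSeq_alternatingWord cs j i p.1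
  rw [M.symmetric j i] at heven
  rw [← prod_map_reverse_alternatingWord, prod_map_signedConj_smul, rightInvSeq_reverse,
    count_reverse, (ZMod.natCast_eq_zero_iff_even).2 heven, wordProd,
    prod_map_reverse_alternatingWord, cs.simple_mul_simple_pow, map_one, add_zero, one_smul]
  rfl

/-- The action of a Coxeter group on signed reflections. -/
noncomputable def signedConjHom : W →* Function.End (W × ZMod 2) :=
  cs.lift ⟨signedConj cs, isLiftable_signedConj cs⟩

/-- The reflection cocycle: the parity of the number of occurrences of `t` in the right inversion
sequence of any word for `w`. -/
noncomputable def inversionParity (w t : W) : ZMod 2 :=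
  (signedConjHom cs w • (t, (0 : ZMod 2))).2

theorem signedConjHom_wordProd_smul [DecidableEq W] (ω : List B) (t : W) (ε : ZMod 2) :
    signedConjHom cs (cs.wordProd ω) • (t, ε) =
      (MulAut.conj (cs.wordProd ω) t, ε + (cs.rightInvSeq ω).count t) := by
  have h (i : B) : signedConjHom cs (cs.simple i) = signedConj cs i :=
    cs.lift_apply_simple (isLiftable_signedConj cs) i
  rw [← prod_map_signedConj_smul, wordProd, map_list_prod, map_map]
  simp only [Function.comp_def, h]

theorem inversionParity_wordProd [DecidableEq W] (ω : List B) (t : W) :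
    inversionParity cs (cs.wordProd ω) t = (cs.rightInvSeq ω).count t := by
  rw [inversionParity, signedConjHom_wordProd_smul, zero_add]

theorem signedConjHom_smul (w t : W) (ε : ZMod 2) :
    signedConjHom cs w • (t, ε) = (MulAut.conj w t, ε + inversionParity cs w t) := by
  classical
  obtain ⟨ω, rfl⟩ := cs.wordProd_surjective w
  rw [inversionParity_wordProd, signedConjHom_wordProd_smul]

theorem inversionParity_mul (x y t : W) :
    inversionParity cs (x * y) t =
      inversionParity cs y t + inversionParity cs x (MulAut.conj y t) := by
  rw [inversionParity, map_mul, mul_smul, signedConjHom_smul, signedConjHom_smul, zero_add]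

theorem inversionParity_one (t : W) : inversionParity cs 1 t = 0 := by
  rw [inversionParity, map_one, one_smul]

theorem inversionParity_simple [DecidableEq W] (i : B) (t : W) :
    inversionParity cs (cs.simple i) t = if cs.simple i = t then 1 else 0 := by
  rw [← cs.wordProd_singleton, inversionParity_wordProd]
  simp [count_singleton]

theorem inversionParity_conj_simple {x t : W} {j : B} (ht : t ≠ cs.simple j)
    (hxt : MulAut.conj x t ≠ cs.simple j) :
    inversionParity cs (MulAut.conj (cs.simple j) x) (MulAut.conj (cs.simple j) t) =
      inversionParity cs x t := by
  classical
  have ht' : cs.simple j ≠ MulAut.conj (cs.simple j) t := fun h => ht <|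
    (MulAut.conj (cs.simple j)).injective (by rw [← h]; simp)
  rw [MulAut.conj_apply _ x, cs.inv_simple, inversionParity_mul, inversionParity_mul,
    ← MulAut.mul_apply, ← map_mul, cs.simple_mul_simple_self, map_one, MulAut.one_apply,
    inversionParity_simple, inversionParity_simple, if_neg ht', if_neg hxt.symm, zero_add, add_zero]

theorem inversionParity_self {t : W} (ht : cs.IsReflection t) : inversionParity cs t t = 1 := by
  classical
  obtain ⟨w, i, rfl⟩ := ht
  rw [← MulAut.conj_apply]
  have hconj : MulAut.conj w⁻¹ (MulAut.conj w (cs.simple i)) = cs.simple i := by simp [mul_assoc]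
  have hinv : inversionParity cs w⁻¹ (MulAut.conj w (cs.simple i)) +
      inversionParity cs w (cs.simple i) = 0 := by
    rw [← inversionParity_one cs (MulAut.conj w (cs.simple i)), ← mul_inv_cancel w,
      inversionParity_mul, hconj]
  rw [show inversionParity cs (MulAut.conj w (cs.simple i)) =
      inversionParity cs (w * cs.simple i * w⁻¹) from rfl, inversionParity_mul, inversionParity_mul,
    hconj, inversionParity_simple, if_pos rfl, MulAut.conj_apply (cs.simple i),
    mul_inv_cancel_right]
  linear_combination hinv

theorem isRightInversion_iff_inversionParity_eq_one {t : W} (ht : cs.IsReflection t) {w : W} :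
    cs.IsRightInversion w t ↔ inversionParity cs w t = 1 := by
  have of_inversionParity {w : W} (h : inversionParity cs w t = 1) : cs.IsRightInversion w t := by
    classical
    obtain ⟨ω, hω, rfl⟩ := cs.exists_isReduced w
    refine cs.isRightInversion_of_mem_rightInvSeq hω (by_contra fun hmem => ?_)
    simp [inversionParity_wordProd, count_eq_zero_of_not_mem hmem] at h
  refine ⟨fun hw => ?_, of_inversionParity⟩
  have h : inversionParity cs (w * t) t ≠ 1 := fun h =>
    ht.isRightInversion_mul_left_iff.1 (of_inversionParity h) hw
  rw [inversionParity_mul, inversionParity_self cs ht, MulAut.conj_apply, mul_inv_cancel_right] at h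
  revert h
  generalize inversionParity cs w t = n
  decide +revert

theorem inversionParity_eq_zero_of_length_lt {w t : W} (ht : cs.IsReflection t)
    (h : cs.length w < cs.length (w * t)) : inversionParity cs w t = 0 := by
  by_contra hne
  have hw := (isRightInversion_iff_inversionParity_eq_one cs ht).2 (Fin.eq_one_of_ne_zero _ hne)
  exact h.asymm hw.2

theorem mem_rightInvSeq_iff {ω : List B} {t : W} :
    t ∈ cs.rightInvSeq ω ↔ ∃ ω₁ i ω₂, ω = ω₁ ++ i :: ω₂ ∧
      t = (cs.wordProd ω₂)⁻¹ * cs.simple i * cs.wordProd ω₂ := by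
  induction ω with
  | nil => simp
  | cons j ω ih =>
    rw [rightInvSeq, mem_cons, ih]
    constructor
    · rintro (rfl | ⟨ω₁, i, ω₂, rfl, rfl⟩)
      · exact ⟨[], j, ω, rfl, rfl⟩
      · exact ⟨j :: ω₁, i, ω₂, rfl, rfl⟩
    · rintro ⟨_ | ⟨k, ω₁⟩, i, ω₂, h, rfl⟩ <;> obtain ⟨rfl, rfl⟩ := cons_eq_cons.1 h
      · exact .inl rfl
      · exact .inr ⟨ω₁, i, ω₂, rfl, rfl⟩

/-- The strong exchange property. -/
theorem exists_append_cons_of_isRightInversion {ω : List B} {t : W}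
    (h : cs.IsRightInversion (cs.wordProd ω) t) :
    ∃ ω₁ i ω₂, ω = ω₁ ++ i :: ω₂ ∧ t = (cs.wordProd ω₂)⁻¹ * cs.simple i * cs.wordProd ω₂ := by
  classical
  refine (mem_rightInvSeq_iff cs).1 (by_contra fun hmem => ?_)
  rw [isRightInversion_iff_inversionParity_eq_one cs h.1, inversionParity_wordProd,
    count_eq_zero_of_not_mem hmem] at h
  simp at h

theorem subsingleton_of_simple_mem {R : Set W} {i : B} (hi : cs.simple i ∈ R)
    (hinv : ∀ a ∈ R, ∀ b ∈ R, cs.IsRightInversion a b) : R.Subsingleton := by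
  classical
  refine Set.subsingleton_of_forall_eq (cs.simple i) fun r hr => by_contra fun hne => ?_
  have h := hinv _ hi _ hr
  rw [isRightInversion_iff_inversionParity_eq_one cs h.1, inversionParity_simple,
    if_neg (Ne.symm hne)] at h
  exact zero_ne_one h

theorem subsingleton_of_forall_isRightInversion {R : Set W}
    (hconj : ∀ a ∈ R, ∀ b ∈ R, MulAut.conj a b ∈ R)
    (hinv : ∀ a ∈ R, ∀ b ∈ R, cs.IsRightInversion a b) : R.Subsingleton := by
  obtain rfl | ⟨r, hr⟩ := R.eq_empty_or_nonempty
  · exact Set.subsingleton_empty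
  obtain ⟨w, i, rfl⟩ := (hinv r hr r hr).1
  -- Conjugation by a simple reflection outside `R` preserves both hypotheses.
  induction w using cs.simple_induction_left generalizing R with
  | one => exact subsingleton_of_simple_mem cs (by simpa using hr) hinv
  | mul_simple_left w j ih =>
    by_cases hj : cs.simple j ∈ R
    · exact subsingleton_of_simple_mem cs hj hinv
    have hne {a : W} (ha : a ∈ R) : a ≠ cs.simple j := ne_of_mem_of_not_mem ha hj
    refine Set.subsingleton_of_image (MulAut.conj (cs.simple j)).injective R (ih ?_ ?_ ?_)
    · rintro _ ⟨a, ha, rfl⟩ _ ⟨b, hb, rfl⟩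
      exact ⟨_, hconj a ha b hb, by simp [mul_assoc]⟩
    · rintro _ ⟨a, ha, rfl⟩ _ ⟨b, hb, rfl⟩
      have hab := hinv a ha b hb
      have hrefl : cs.IsReflection (MulAut.conj (cs.simple j) b) := hab.1.conj _
      rw [isRightInversion_iff_inversionParity_eq_one cs hrefl,
        inversionParity_conj_simple cs (hne hb) (hne (hconj a ha b hb)),
        ← isRightInversion_iff_inversionParity_eq_one cs hab.1]
      exact hab
    · exact ⟨_, hr, by simp [mul_assoc]⟩

end ReflectionCocycle

section Involutions

variable {G : Type*} [Group G] {a b : G}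

theorem zpow_mul_mul_zpow_mul (ha : a * a = 1) (hb : b * b = 1) (k l : ℤ) :
    (a * b) ^ k * a * ((a * b) ^ l * a) = (a * b) ^ (k - l) := by
  have hinv : SemiconjBy a (a * b) (a * b)⁻¹ := by
    rw [SemiconjBy, mul_inv_rev, inv_eq_of_mul_eq_one_left ha, inv_eq_of_mul_eq_one_left hb,
      mul_assoc b, ha, ← mul_assoc, ha, one_mul, mul_one]
  rw [mul_assoc, ← mul_assoc a, (hinv.zpow_right l).eq, mul_assoc _ a, ha, mul_one, inv_zpow',
    ← zpow_add, sub_eq_add_neg]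

theorem conj_zpow_mul (ha : a * a = 1) (hb : b * b = 1) (k l : ℤ) :
    MulAut.conj ((a * b) ^ k * a) ((a * b) ^ l * a) = (a * b) ^ (2 * k - l) * a := by
  have hinv : ((a * b) ^ k * a)⁻¹ = (a * b) ^ k * a :=
    inv_eq_of_mul_eq_one_left (by rw [zpow_mul_mul_zpow_mul ha hb, sub_self, zpow_zero])
  rw [MulAut.conj_apply, hinv, zpow_mul_mul_zpow_mul ha hb, ← mul_assoc, ← zpow_add]
  congr 2
  ring

theorem conj_mul_zpow_mul (ha : a * a = 1) (hb : b * b = 1) (k : ℤ) :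
    MulAut.conj (a * b) ((a * b) ^ k * a) = (a * b) ^ (k + 2) * a := by
  rw [MulAut.conj_apply, mul_inv_rev, inv_eq_of_mul_eq_one_left ha, inv_eq_of_mul_eq_one_left hb,
    show k + 2 = 1 + k + 1 by ring, zpow_add_one, zpow_one_add]
  simp only [mul_assoc]

end Involutions

section Dihedral

variable {B W : Type*} [Group W] {M : CoxeterMatrix B} (cs : CoxeterSystem M W) {x a b : W}

theorem isReflection_zpow_mul (ha : cs.IsReflection a) (hb : cs.IsReflection b) (k : ℤ) :
    cs.IsReflection ((a * b) ^ k * a) := by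
  have hreflect (k l : ℤ) (h : cs.IsReflection ((a * b) ^ l * a)) :
      cs.IsReflection ((a * b) ^ (2 * k - l) * a) := by
    rw [← conj_zpow_mul ha.mul_self hb.mul_self]
    exact h.conj _
  obtain ⟨j, rfl | rfl⟩ := Int.even_or_odd' k
  · simpa using hreflect j 0 (by simpa using ha)
  · simpa using hreflect j (-1) (by simpa [hb.inv] using hb)

theorem inversionParity_zpow_mul_eq_one (ha : cs.IsReflection a) (hb : cs.IsReflection b)
    (hab : ∀ k : ℤ, inversionParity cs (a * b) ((a * b) ^ k * a) = 0) (k l : ℤ) :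
    inversionParity cs ((a * b) ^ k * a) ((a * b) ^ l * a) = 1 := by
  have hper : Function.Periodic
      (fun k : ℤ => inversionParity cs ((a * b) ^ k * a) ((a * b) ^ l * a)) 1 := fun k => by
    dsimp only
    rw [add_comm, zpow_one_add, mul_assoc, inversionParity_mul,
      conj_zpow_mul ha.mul_self hb.mul_self, hab, add_zero]
  have hself := inversionParity_self cs (isReflection_zpow_mul cs ha hb l)
  simpa [hself] using hper.int_mul (k - l) l

theorem eq_of_forall_inversionParity_zpow_mul_eq_zero (ha : cs.IsReflection a)
    (hb : cs.IsReflection b)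
    (hab : ∀ k : ℤ, inversionParity cs (a * b) ((a * b) ^ k * a) = 0) : a = b := by
  have hR : (Set.range fun k : ℤ => (a * b) ^ k * a).Subsingleton := by
    refine subsingleton_of_forall_isRightInversion cs ?_ ?_
    · rintro _ ⟨k, rfl⟩ _ ⟨l, rfl⟩
      exact ⟨_, (conj_zpow_mul ha.mul_self hb.mul_self k l).symm⟩
    · rintro _ ⟨k, rfl⟩ _ ⟨l, rfl⟩
      rw [isRightInversion_iff_inversionParity_eq_one cs (isReflection_zpow_mul cs ha hb l)]
      exact inversionParity_zpow_mul_eq_one cs ha hb hab k l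
  exact hR ⟨0, by simp⟩ ⟨-1, by simp [hb.inv]⟩

theorem exists_length_mul_zpow_mul_lt (ha : cs.IsReflection a) (hb : cs.IsReflection b)
    (hne : a ≠ b) (hxa : cs.length x < cs.length (x * a))
    (hxab : cs.length (x * (a * b)) < cs.length (x * a)) :
    ∃ k : ℤ, cs.length (x * ((a * b) ^ k * a)) < cs.length (x * a) := by
  by_contra! hmin
  refine hne (eq_of_forall_inversionParity_zpow_mul_eq_zero cs ha hb fun k => ?_)
  have hrefl := isReflection_zpow_mul cs ha hb
  have hx (k : ℤ) : inversionParity cs x ((a * b) ^ k * a) = 0 :=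
    inversionParity_eq_zero_of_length_lt cs (hrefl k) (hxa.trans_le (hmin k))
  have hxp : inversionParity cs (x * (a * b)) ((a * b) ^ k * a) = 0 := by
    refine inversionParity_eq_zero_of_length_lt cs (hrefl k) (hxab.trans_le ?_)
    rw [mul_assoc x, ← mul_assoc (a * b), ← zpow_one_add]
    exact hmin (1 + k)
  rwa [inversionParity_mul, conj_mul_zpow_mul ha.mul_self hb.mul_self, hx, add_zero] at hxp

end Dihedral

namespace HurwitzMove

open Relation

variable {W : Type*} [Group W] {l l' : List W}

theorem eqvGen_append (h : EqvGen HurwitzMove l l') (u v : List W) :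
    EqvGen HurwitzMove (u ++ l ++ v) (u ++ l' ++ v) := by
  have happend (l l' : List W) : HurwitzMove l l' → HurwitzMove (u ++ l ++ v) (u ++ l' ++ v) := by
    rintro ⟨l₁, l₂, a, b, rfl, rfl⟩
    exact ⟨u ++ l₁, l₂ ++ v, a, b, by simp, by simp⟩
  exact Quot.eqvGen_exact (congrArg (Quot.map _ happend) (Quot.eqvGen_sound h))

theorem length_eq_of_eqvGen (h : EqvGen HurwitzMove l l') : l.length = l'.length := by
  refine congrArg (Quot.lift List.length ?_) (Quot.eqvGen_sound h)
  rintro _ _ ⟨l₁, l₂, a, b, rfl, rfl⟩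
  simp

theorem eqvGen_append_conj_prod (hl : ∀ b ∈ l, b * b = 1) (a : W) :
    EqvGen HurwitzMove (l ++ [l.prod⁻¹ * a * l.prod]) (a :: l) := by
  induction l generalizing a with
  | nil => simpa using .refl _
  | cons b l ih =>
    rw [List.forall_mem_cons] at hl
    have htail := eqvGen_append (ih hl.2 (b⁻¹ * a * b)) [b] []
    have hhead : HurwitzMove (b :: (b⁻¹ * a * b) :: l) (a :: b :: l) :=
      ⟨[], l, b, b⁻¹ * a * b, rfl, by simp [mul_assoc, hl.1]⟩
    refine .trans _ _ _ ?_ (.rel _ _ hhead)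
    simpa [mul_assoc] using htail

theorem eqvGen_pair_zpow {a b : W} (ha : a * a = 1) (hb : b * b = 1) (k : ℤ) :
    EqvGen HurwitzMove [a, b] [(a * b) ^ k * a, (a * b) ^ (k - 1) * a] := by
  have hmove (k : ℤ) : HurwitzMove [(a * b) ^ k * a, (a * b) ^ (k - 1) * a]
      [(a * b) ^ (k + 1) * a, (a * b) ^ k * a] := by
    refine ⟨[], [], _, _, rfl, ?_⟩
    rw [zpow_mul_mul_zpow_mul ha hb, ← mul_assoc, ← zpow_add, sub_sub_cancel, add_comm 1]
    rfl
  induction k with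
  | zero => simpa [inv_eq_of_mul_eq_one_left hb] using .refl _
  | succ n ih => exact ih.trans _ _ _ (.rel _ _ (by simpa using hmove n))
  | pred n ih => exact ih.trans _ _ _ (.symm _ _ (.rel _ _ (by simpa using hmove (-n - 1))))

end HurwitzMove

section ReflectionFactorization

open Relation

variable {B W : Type*} [Group W] {M : CoxeterMatrix B} {cs : CoxeterSystem M W} {w : W}
  {l l' : List W}

/-- A factorization of `w` into reflections, as a list. -/
structure IsReflectionFactorization (cs : CoxeterSystem M W) (w : W) (l : List W) : Prop where
  isReflection : ∀ t ∈ l, cs.IsReflection t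
  prod_eq : l.prod = w

/-- The elements of the set `Red_T(w)`: factorizations of `w` into reflections with the minimal
number of factors. -/
def IsReducedReflectionFactorization (cs : CoxeterSystem M W) (w : W) (l : List W) : Prop :=
  MinimalFor (IsReflectionFactorization cs w) List.length l

namespace IsReflectionFactorization

theorem concat {t : W} (hl : IsReflectionFactorization cs w l) (ht : cs.IsReflection t) :
    IsReflectionFactorization cs (w * t) (l ++ [t]) :=
  ⟨List.forall_mem_append.2 ⟨hl.isReflection, by simpa⟩, by simp [hl.prod_eq]⟩

theorem of_concat {t : W} (hl : IsReflectionFactorization cs w (l ++ [t])) :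
    IsReflectionFactorization cs (w * t) l := by
  have ht : cs.IsReflection t := hl.isReflection t (by simp)
  refine ⟨fun r hr => hl.isReflection r (by simp [hr]), ?_⟩
  rw [← hl.prod_eq, List.prod_append, List.prod_singleton, mul_assoc, ht.mul_self, mul_one]

theorem of_append_pair_self {l₁ l₂ : List W} {a : W}
    (hl : IsReflectionFactorization cs w (l₁ ++ [a, a] ++ l₂)) :
    IsReflectionFactorization cs w (l₁ ++ l₂) := by
  have ha : a * a = 1 := (hl.isReflection a (by simp)).mul_self
  refine ⟨fun r hr => hl.isReflection r ?_, ?_⟩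
  · simp only [List.mem_append] at hr ⊢
    tauto
  · rw [← hl.prod_eq]
    simp [← mul_assoc a, ha]

theorem iff_of_hurwitzMove (h : HurwitzMove l l') :
    IsReflectionFactorization cs w l ↔ IsReflectionFactorization cs w l' := by
  obtain ⟨l₁, l₂, a, b, rfl, rfl⟩ := h
  have hconj (ha : cs.IsReflection a) : cs.IsReflection (a * b * a) ↔ cs.IsReflection b := by
    simpa [ha.inv] using cs.isReflection_conj_iff a b
  have hprod (ha : cs.IsReflection a) :
      (l₁ ++ [a * b * a, a] ++ l₂).prod = (l₁ ++ [a, b] ++ l₂).prod := by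
    simp [mul_assoc, ← mul_assoc a a, ha.mul_self]
  constructor <;> rintro ⟨hl, rfl⟩ <;> have ha := hl a (by simp) <;>
    refine ⟨?_, by rw [hprod ha]⟩ <;>
    simp only [List.mem_append, List.mem_cons, or_imp, forall_and, forall_eq] at hl ⊢ <;>
    tauto

theorem of_eqvGen (hl : IsReflectionFactorization cs w l) (h : EqvGen HurwitzMove l l') :
    IsReflectionFactorization cs w l' :=
  cast (congrArg (Quot.lift (IsReflectionFactorization cs w) fun _ _ h =>
    propext (iff_of_hurwitzMove h)) (Quot.eqvGen_sound h)) hl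

theorem exists_isReduced (hl : IsReflectionFactorization cs w l) :
    ∃ l', IsReducedReflectionFactorization cs w l' :=
  exists_minimalFor_of_wellFoundedLT _ _ ⟨l, hl⟩

end IsReflectionFactorization

namespace IsReducedReflectionFactorization

theorem of_eqvGen (hl : IsReducedReflectionFactorization cs w l) (h : EqvGen HurwitzMove l l') :
    IsReducedReflectionFactorization cs w l' :=
  ⟨hl.1.of_eqvGen h, by rw [← HurwitzMove.length_eq_of_eqvGen h]; exact hl.2⟩

theorem of_concat {t : W} (hl : IsReducedReflectionFactorization cs w (l ++ [t])) :
    IsReducedReflectionFactorization cs (w * t) l := by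
  have ht : cs.IsReflection t := hl.1.isReflection t (by simp)
  refine ⟨hl.1.of_concat, fun k hk hle => ?_⟩
  have hk' : IsReflectionFactorization cs w (k ++ [t]) := by
    simpa [mul_assoc, ht.mul_self] using hk.concat ht
  simpa using hl.2 hk' (by simpa using hle)

theorem ne_of_append_pair {l₁ l₂ : List W} {a b : W}
    (hl : IsReducedReflectionFactorization cs w (l₁ ++ [a, b] ++ l₂)) : a ≠ b := by
  rintro rfl
  have h := hl.2 hl.1.of_append_pair_self (by simp only [List.length_append]; lia)
  simp at h

end IsReducedReflectionFactorization

/-- The total length of the partial products `x * t₁`, `x * t₁ * t₂`, … of a list, starting from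
`x`. -/
noncomputable def partialProdLength (cs : CoxeterSystem M W) (x : W) : List W → ℕ
  | [] => 0
  | t :: l => cs.length (x * t) + partialProdLength cs (x * t) l

theorem partialProdLength_append (x : W) (l₁ l₂ : List W) :
    partialProdLength cs x (l₁ ++ l₂) =
      partialProdLength cs x l₁ + partialProdLength cs (x * l₁.prod) l₂ := by
  induction l₁ generalizing x with
  | nil => simp [partialProdLength]
  | cons t l₁ ih => simp [partialProdLength, ih, add_assoc, mul_assoc]

theorem partialProdLength_lt_of_length_lt {l₁ l₂ : List W} {a b a' b' : W} (hab : a * b = a' * b')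
    (hlt : cs.length (l₁.prod * a') < cs.length (l₁.prod * a)) :
    partialProdLength cs 1 (l₁ ++ [a', b'] ++ l₂) <
      partialProdLength cs 1 (l₁ ++ [a, b] ++ l₂) := by
  simp [partialProdLength_append, partialProdLength, hab, mul_assoc, hlt]

theorem length_prod_lt_of_forall_not_peak {t : W} (hl : ∀ r ∈ l ++ [t], cs.IsReflection r)
    (hpeak : ∀ l₁ a b l₂, l ++ [t] = l₁ ++ [a, b] ++ l₂ →
      cs.length l₁.prod < cs.length (l₁.prod * a) →
      ¬ cs.length (l₁.prod * (a * b)) < cs.length (l₁.prod * a)) :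
    cs.length l.prod < cs.length (l.prod * t) := by
  have ht : cs.IsReflection t := hl t (by simp)
  induction l using List.reverseRecOn generalizing t with
  | nil => simpa using ht.odd_length.pos
  | append_singleton l u ih =>
    have hu : cs.IsReflection u := hl u (by simp)
    have hup : cs.length l.prod < cs.length (l.prod * u) :=
      ih (fun r hr => hl r (List.mem_append_left _ hr))
        (fun l₁ a b l₂ h => hpeak l₁ a b (l₂ ++ [t]) (by simp [h])) hu
    have hnot := hpeak l u t [] (by simp) hup
    have hne := ht.length_mul_left_ne (l.prod * u)
    rw [← mul_assoc] at hnot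
    rw [List.prod_append, List.prod_singleton]
    lia

theorem IsReducedReflectionFactorization.exists_eqvGen_partialProdLength_lt {l₁ l₂ : List W}
    {a b : W} (hl : IsReducedReflectionFactorization cs w (l₁ ++ [a, b] ++ l₂))
    (hup : cs.length l₁.prod < cs.length (l₁.prod * a))
    (hdown : cs.length (l₁.prod * (a * b)) < cs.length (l₁.prod * a)) :
    ∃ l', EqvGen HurwitzMove (l₁ ++ [a, b] ++ l₂) l' ∧
      partialProdLength cs 1 l' < partialProdLength cs 1 (l₁ ++ [a, b] ++ l₂) := by
  have ha : cs.IsReflection a := hl.1.isReflection a (by simp)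
  have hb : cs.IsReflection b := hl.1.isReflection b (by simp)
  obtain ⟨k, hk⟩ := exists_length_mul_zpow_mul_lt cs ha hb hl.ne_of_append_pair hup hdown
  refine ⟨_, HurwitzMove.eqvGen_append (HurwitzMove.eqvGen_pair_zpow ha.mul_self hb.mul_self k) _ _,
    partialProdLength_lt_of_length_lt ?_ hk⟩
  rw [zpow_mul_mul_zpow_mul ha.mul_self hb.mul_self, sub_sub_cancel, zpow_one]

theorem IsReducedReflectionFactorization.exists_eqvGen_length_lt
    (hl : IsReducedReflectionFactorization cs w l) (hne : l ≠ []) :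
    ∃ k t, EqvGen HurwitzMove l (k ++ [t]) ∧ cs.length k.prod < cs.length (k.prod * t) := by
  obtain ⟨l', hl', hmin⟩ := exists_minimalFor_of_wellFoundedLT (EqvGen HurwitzMove l)
    (partialProdLength cs 1) ⟨l, .refl l⟩
  obtain rfl | ⟨k, t, rfl⟩ := l'.eq_nil_or_concat'
  · exact absurd (List.length_eq_zero_iff.1 (HurwitzMove.length_eq_of_eqvGen hl')) hne
  have hred := hl.of_eqvGen hl'
  refine ⟨k, t, hl', length_prod_lt_of_forall_not_peak hred.1.isReflection ?_⟩
  intro l₁ a b l₂ heq hup hdown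
  rw [heq] at hred hl' hmin
  obtain ⟨l'', hl'', hlt⟩ := hred.exists_eqvGen_partialProdLength_lt hup hdown
  exact (hmin (hl'.trans _ _ _ hl'') hlt.le).not_gt hlt

theorem IsReducedReflectionFactorization.eqvGen_map_simple {ω : List B}
    (hl : IsReducedReflectionFactorization cs (cs.wordProd ω) l) (hω : ω.Nodup) :
    EqvGen HurwitzMove l (ω.map cs.simple) := by
  induction hn : l.length generalizing l ω with
  | zero =>
    obtain rfl := List.length_eq_zero_iff.1 hn
    obtain rfl : ω = [] := by_contra fun hne =>
      wordProd_ne_one_of_nodup cs hω hne hl.1.prod_eq.symm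
    exact .refl _
  | succ n ih =>
    obtain ⟨k, t, hkt, hlt⟩ := hl.exists_eqvGen_length_lt (List.ne_nil_of_length_eq_add_one hn)
    have hred := hl.of_eqvGen hkt
    have ht : cs.IsReflection t := hred.1.isReflection t (by simp)
    have hk : IsReducedReflectionFactorization cs (cs.wordProd ω * t) k := hred.of_concat
    have hinv : cs.IsRightInversion (cs.wordProd ω) t := ⟨ht, by
      have hprod := hred.1.prod_eq
      rw [List.prod_append, List.prod_singleton] at hprod
      rwa [hprod, hk.1.prod_eq] at hlt⟩
    obtain ⟨ω₁, i, ω₂, rfl, rfl⟩ := exists_append_cons_of_isRightInversion cs hinv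
    have hdel : cs.wordProd (ω₁ ++ i :: ω₂) *
        ((cs.wordProd ω₂)⁻¹ * cs.simple i * cs.wordProd ω₂) = cs.wordProd (ω₁ ++ ω₂) := by
      simp [cs.wordProd_append, cs.wordProd_cons, mul_assoc]
    have hklen : k.length = n := by
      simpa [hn] using (HurwitzMove.length_eq_of_eqvGen hkt).symm
    have hkω : EqvGen HurwitzMove k ((ω₁ ++ ω₂).map cs.simple) :=
      ih (hdel ▸ hk) (hω.sublist (by simp)) hklen
    have hslide : EqvGen HurwitzMove
        (ω₂.map cs.simple ++ [(cs.wordProd ω₂)⁻¹ * cs.simple i * cs.wordProd ω₂])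
        (cs.simple i :: ω₂.map cs.simple) :=
      HurwitzMove.eqvGen_append_conj_prod (by simp) _
    refine hkt.trans _ _ _ (.trans _ _ _ (HurwitzMove.eqvGen_append hkω [] _) ?_)
    simpa using HurwitzMove.eqvGen_append hslide (ω₁.map cs.simple) []

end ReflectionFactorization

theorem hurwitz_transitive_on_parabolic_coxeter_element_general {B W : Type*} [Group W]
    {M : CoxeterMatrix B} (cs : CoxeterSystem M W) {ω : List B} (hω : ω.Nodup) {l : List W}
    (hlen : l.length ≤ ω.length) (hl : ∀ t ∈ l, cs.IsReflection t)
    (hprod : l.prod = cs.wordProd ω) :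
    Relation.EqvGen HurwitzMove l (ω.map cs.simple) := by
  have hfact : IsReflectionFactorization cs (cs.wordProd ω) l := ⟨hl, hprod⟩
  obtain ⟨k, hk⟩ := hfact.exists_isReduced
  have hklen : k.length = ω.length := by
    simpa using HurwitzMove.length_eq_of_eqvGen (hk.eqvGen_map_simple hω)
  have hred : IsReducedReflectionFactorization cs (cs.wordProd ω) l :=
    ⟨hfact, fun j hj _ => (hlen.trans_eq hklen.symm).trans (hk.le hj)⟩
  exact hred.eqvGen_map_simple hω

/-- Let `(W,T)` be a dual Coxeter system of finite rank `m`
(witnessed by a Coxeter system `cs` indexed by `Fin m` whose set of reflections is `T`),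
and let `c = s₁ ⋯ sₙ` be a parabolic Coxeter element (the product of the first `n ≤ m`
simple generators of `cs`).  Then the Hurwitz action of the braid group `Bₙ` on
`Red_T(c)` is transitive: every tuple `(t₁, …, tₙ) ∈ Tⁿ` with `c = t₁ ⋯ tₙ` is connected
to `(s₁, …, sₙ)` by a sequence of Hurwitz moves and their inverses. -/
theorem hurwitz_transitive_on_parabolic_coxeter_element
    {W : Type*} [Group W] (T : Set W) (m n : ℕ) (hmn : n ≤ m)
    (M : CoxeterMatrix (Fin m)) (cs : CoxeterSystem M W)
    (hT : {t | cs.IsReflection t} = T)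
    (c : W) (hc : c = (List.ofFn fun i : Fin n => cs.simple (Fin.castLE hmn i)).prod)
    (l : List W) (hlen : l.length = n) (hmem : ∀ t ∈ l, t ∈ T) (hprod : l.prod = c) :
    Relation.EqvGen HurwitzMove l
      (List.ofFn fun i : Fin n => cs.simple (Fin.castLE hmn i)) := by
  subst hT hc
  have h := hurwitz_transitive_on_parabolic_coxeter_element_general cs
    (ω := List.ofFn (Fin.castLE hmn)) (List.nodup_ofFn.2 (Fin.castLE_injective hmn))
    (by simp [hlen]) hmem (by rw [hprod, CoxeterSystem.wordProd, List.map_ofFn]; rfl)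
  rwa [List.map_ofFn] at h
end

section
/- Let (W,S) be a Coxeter system of finite rank with reflection set T. An element w ∈ W is a standard parabolic Coxeter element for (W,S) (i.e., w is a product of pairwise distinct simple generators, each occurring exactly once) if and only if ℓ_T(w) = ℓ(w), where ℓ is the length function with respect to S and ℓ_T is the length function with respect to T. -/
/-- The reflection length `ℓ_T` of `w`: the minimal length of a factorization of `w`
into reflections. -/
noncomputable def reflLength {B : Type*} {W : Type*} [Group W] {M : CoxeterMatrix B}
    (cs : CoxeterSystem M W) (w : W) : ℕ :=
  sInf {n | ∃ l : List W, (∀ t ∈ l, cs.IsReflection t) ∧ l.prod = w ∧ l.length = n}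

/-!
For the forward direction, let `W` act linearly so that each simple generator `s i` acts as a
reflection `v ↦ v - f i v • x i` with both the roots `x i` and the coroots `f i` linearly
independent. The braid relations hold because, for reflections `s` and `t` with roots `x`, `y` and
coroots `f`, `g`, the product `s t` is annihilated by `(X ^ 2 - (f y * g x - 2) X + 1) (X - 1)`,
which for `f y = g x = -2 cos (π / m)` and `m ≥ 3` divides `X ^ m - 1`. Every reflection of `W`
moves vectors along a single line, so `w - 1` has rank at most `ℓ_T(w)`. On the other hand, if `w`
is a product of `n` distinct simple generators, then `w - 1` has rank exactly `n`, whence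
`n ≤ ℓ_T(w) ≤ ℓ(w) ≤ n`.

For the converse, if a factorization of `w` into reflections repeats the reflection `t`, then
`t a t b = (t a t⁻¹) b` and conjugation invariance of `ℓ_T` show that it is not a shortest one;
so if `ℓ_T(w) = ℓ(w)`, a reduced word for `w` cannot repeat a letter.
-/

open Module Polynomial

section Rank

variable {K V : Type*} [DivisionRing K] [AddCommGroup V] [Module K V]

theorem rank_mul_sub_one_le (f g : End K V) :
    LinearMap.rank (f * g - 1) ≤ LinearMap.rank (f - 1) + LinearMap.rank (g - 1) := by
  have h : f * g - 1 = (f - 1) ∘ₗ g + (g - 1) := by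
    rw [← End.mul_eq_comp, sub_one_mul, sub_add_sub_cancel]
  rw [h]
  exact (LinearMap.rank_add_le _ _).trans (by gcongr; exact LinearMap.rank_comp_le_left _ _)

theorem rank_list_prod_sub_one_le {l : List (End K V)} (hl : ∀ f ∈ l, LinearMap.rank (f - 1) ≤ 1) :
    LinearMap.rank (l.prod - 1) ≤ l.length := by
  induction l with
  | nil => simp
  | cons f l ih =>
    rw [List.forall_mem_cons] at hl
    rw [List.prod_cons, List.length_cons, Nat.cast_succ, add_comm]
    exact (rank_mul_sub_one_le f l.prod).trans (add_le_add hl.1 (ih hl.2))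

theorem rank_preReflection_sub_one_le {R V : Type*} [CommRing R] [Nontrivial R] [AddCommGroup V]
    [Module R V] (x : V) (f : Dual R V) : LinearMap.rank (preReflection x f - 1) ≤ 1 := by
  have h : LinearMap.range (preReflection x f - 1) ≤ Submodule.span R {x} := by
    rintro _ ⟨v, rfl⟩
    exact Submodule.mem_span_singleton.mpr ⟨-f v, by simp [preReflection_apply]⟩
  exact (Submodule.rank_mono h).trans ((rank_span_le _).trans_eq (Cardinal.mk_singleton x))

end Rank

section IndependentReflections

theorem list_prod_preReflection_apply_of_forall_eq_zero {ι R V : Type*} [CommRing R]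
    [AddCommGroup V] [Module R V] {x : ι → V} {f : ι → Dual R V} {ω : List ι} {v : V}
    (hv : ∀ i ∈ ω, f i v = 0) :
    (ω.map fun i ↦ preReflection (x i) (f i)).prod v = v := by
  induction ω with
  | nil => simp
  | cons j ω ih =>
    rw [List.forall_mem_cons] at hv
    simp [ih hv.2, preReflection_apply, hv.1]

variable {ι K V : Type*} [Field K] [AddCommGroup V] [Module K V] {x : ι → V} {f : ι → Dual K V}

theorem exists_forall_eq_zero_and_ne_zero_of_linearIndependent (hf : LinearIndependent K f)
    {s : Set ι} (hs : s.Finite) {j : ι} (hj : j ∉ s) : ∃ v, (∀ i ∈ s, f i v = 0) ∧ f j v ≠ 0 := by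
  by_contra! h
  have := hs.to_subtype
  refine hf.notMem_span_image hj ?_
  rw [Set.image_eq_range]
  refine mem_span_of_iInf_ker_le_ker fun v hv ↦ h v fun i hi ↦ ?_
  simpa using (Submodule.mem_iInf _).mp hv ⟨i, hi⟩

theorem mem_range_list_prod_preReflection_sub_one (hf : LinearIndependent K f) {ω : List ι}
    (hω : ω.Nodup) {i : ι} (hi : i ∈ ω) :
    x i ∈ LinearMap.range ((ω.map fun i ↦ preReflection (x i) (f i)).prod - 1) := by
  induction ω generalizing i with
  | nil => simp at hi
  | cons j ω ih =>
    rw [List.nodup_cons] at hω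
    set g := (ω.map fun i ↦ preReflection (x i) (f i)).prod with hg
    have apply_eq (v : V) :
        (preReflection (x j) (f j) * g - 1) v = (g - 1) v - f j (g v) • x j := by
      simp only [LinearMap.sub_apply, Module.End.mul_apply, preReflection_apply,
        Module.End.one_apply]
      abel
    rw [List.map_cons, List.prod_cons, ← hg]
    have hj : x j ∈ LinearMap.range (preReflection (x j) (f j) * g - 1) := by
      obtain ⟨v, hv, hjv⟩ :=
        exists_forall_eq_zero_and_ne_zero_of_linearIndependent hf ω.finite_toSet hω.1
      have hgv : g v = v := list_prod_preReflection_apply_of_forall_eq_zero hv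
      refine ⟨-(f j v)⁻¹ • v, ?_⟩
      rw [map_smul, apply_eq, LinearMap.sub_apply, hgv]
      simp [smul_smul, hjv]
    obtain rfl | hi := List.mem_cons.mp hi
    · exact hj
    obtain ⟨v, hv⟩ := ih hω.2 hi
    rw [← hv, ← sub_add_cancel ((g - 1) v) (f j (g v) • x j), ← apply_eq]
    exact add_mem (LinearMap.mem_range_self _ v) (Submodule.smul_mem _ _ hj)

theorem rank_list_prod_preReflection_sub_one (hx : LinearIndependent K x)
    (hf : LinearIndependent K f) {ω : List ι} (hω : ω.Nodup) :
    LinearMap.rank ((ω.map fun i ↦ preReflection (x i) (f i)).prod - 1) = ω.length := by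
  apply le_antisymm
  · rw [← ω.length_map (f := fun i ↦ preReflection (x i) (f i))]
    refine rank_list_prod_sub_one_le fun g hg ↦ ?_
    obtain ⟨i, -, rfl⟩ := List.mem_map.mp hg
    exact rank_preReflection_sub_one_le _ _
  · have h : LinearIndependent K fun k : Fin ω.length ↦
        (⟨x (ω.get k), mem_range_list_prod_preReflection_sub_one hf hω (ω.get_mem k)⟩ :
          LinearMap.range ((ω.map fun i ↦ preReflection (x i) (f i)).prod - 1)) :=
      .of_comp (Submodule.subtype _) (hx.comp ω.get (List.nodup_iff_injective_get.mp hω))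
    simpa using h.cardinal_lift_le_rank

end IndependentReflections

section BraidRelation

section CommRing

variable {R V : Type*} [CommRing R] [AddCommGroup V] [Module R V] {x y : V} {f g : Dual R V}

theorem preReflection_mul_self (hf : f x = 2) : preReflection x f * preReflection x f = 1 :=
  LinearMap.ext (involutive_preReflection hf)

theorem aeval_preReflection_mul_preReflection (hf : f x = 2) (hg : g y = 2) :
    aeval (preReflection x f * preReflection y g)
      ((X ^ 2 - C (f y * g x - 2) * X + 1) * (X - 1)) = 0 := by
  ext v
  simp only [pow_two, map_sub, map_mul, map_add, aeval_X, aeval_C, map_one, map_smul,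
    Algebra.algebraMap_eq_smul_one, Algebra.mul_smul_comm, mul_one, End.mul_apply, End.one_apply,
    LinearMap.sub_apply, LinearMap.add_apply, LinearMap.smul_apply, LinearMap.zero_apply,
    preReflection_apply, hf, hg]
  module

theorem preReflection_mul_preReflection_sq_eq_one (hf : f x = 2) (hg : g y = 2)
    (hfy : f y = 0) (hgx : g x = 0) : (preReflection x f * preReflection y g) ^ 2 = 1 := by
  ext v
  simp only [pow_two, Module.End.mul_apply, Module.End.one_apply, preReflection_apply, map_sub,
    map_smul, hf, hg, hfy, hgx]
  module

end CommRing

theorem X_sq_sub_two_cos_dvd_geom_sum {m : ℕ} (hm : 3 ≤ m) :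
    (X ^ 2 - C (2 * Real.cos (2 * Real.pi / m)) * X + 1 : ℝ[X]) ∣ ∑ i ∈ Finset.range m, X ^ i := by
  set θ : ℝ := 2 * Real.pi / m with hθ
  have hζ : IsPrimitiveRoot (Complex.exp (θ * Complex.I)) m := by
    convert Complex.isPrimitiveRoot_exp m (by omega) using 2
    push_cast [hθ]
    ring
  have root : aeval (Complex.exp (θ * Complex.I)) (∑ i ∈ Finset.range m, X ^ i : ℝ[X]) = 0 := by
    simpa using hζ.geom_sum_eq_zero (by omega)
  have hθ_lt : θ < Real.pi := by
    have : (3 : ℝ) ≤ m := by exact_mod_cast hm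
    rw [hθ, div_lt_iff₀ (by positivity)]
    nlinarith [Real.pi_pos]
  have im_ne_zero : (Complex.exp (θ * Complex.I)).im ≠ 0 := by
    rw [Complex.exp_ofReal_mul_I_im]
    exact (Real.sin_pos_of_pos_of_lt_pi (by positivity) hθ_lt).ne'
  simpa [Complex.exp_ofReal_mul_I_re, Complex.norm_exp_ofReal_mul_I] using
    quadratic_dvd_of_aeval_eq_zero_im_ne_zero _ root im_ne_zero

theorem preReflection_mul_preReflection_pow_eq_one {V : Type*} [AddCommGroup V] [Module ℝ V]
    {x y : V} {f g : Dual ℝ V} (hf : f x = 2) (hg : g y = 2) {m : ℕ} (hm : 2 ≤ m)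
    (hfy : f y = -2 * Real.cos (Real.pi / m)) (hgx : g x = -2 * Real.cos (Real.pi / m)) :
    (preReflection x f * preReflection y g) ^ m = 1 := by
  obtain rfl | hm : m = 2 ∨ 3 ≤ m := by omega
  · exact preReflection_mul_preReflection_sq_eq_one hf hg (by simpa using hfy) (by simpa using hgx)
  have trace_eq : f y * g x - 2 = 2 * Real.cos (2 * Real.pi / m) := by
    rw [hfy, hgx, mul_div_assoc, Real.cos_two_mul]
    ring
  have dvd : (X ^ 2 - C (f y * g x - 2) * X + 1) * (X - 1) ∣ (X ^ m - 1 : ℝ[X]) := by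
    rw [trace_eq, ← geom_sum_mul]
    exact mul_dvd_mul_right (X_sq_sub_two_cos_dvd_geom_sum hm) _
  have := aeval_eq_zero_of_dvd_aeval_eq_zero dvd (aeval_preReflection_mul_preReflection hf hg)
  rwa [map_sub, map_pow, aeval_X, map_one, sub_eq_zero] at this

end BraidRelation

section Realization

/-- The real vector space on which a Coxeter group with simple generators indexed by `B` is made to
act. The first copy of `B` indexes the basis of simple roots; the second copy is there to separate
the simple coroots, whose restrictions to the span of the simple roots need not be linearly
independent. -/
abbrev RealizationSpace (B : Type*) := B ⊕ B →₀ ℝ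

variable {B W : Type*} [Group W] {M : CoxeterMatrix B}

/-- The `i`-th simple root in the realization of a Coxeter matrix. -/
noncomputable def simpleRoot (i : B) : RealizationSpace B := Finsupp.single (Sum.inl i) 1

variable (M) in
/-- The `i`-th simple coroot in the realization of `M`, a linear form sending the `j`-th simple root
to `-2 cos (π / M i j)`. If `M i j = 0`, which encodes `∞`, then Lean's `π / 0 = 0` gives the
customary value `-2`. -/
noncomputable def simpleCoroot (i : B) : Dual ℝ (RealizationSpace B) :=
  Finsupp.linearCombination ℝ (Sum.elim (fun j ↦ -2 * Real.cos (Real.pi / M i j)) 0) +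
    Finsupp.lapply (Sum.inr i)

theorem simpleCoroot_simpleRoot (i j : B) :
    simpleCoroot M i (simpleRoot j) = -2 * Real.cos (Real.pi / M i j) := by
  simp [simpleCoroot, simpleRoot]

theorem simpleCoroot_simpleRoot_self (i : B) : simpleCoroot M i (simpleRoot i) = 2 := by
  simp [simpleCoroot_simpleRoot]

theorem linearIndependent_simpleRoot :
    LinearIndependent ℝ (simpleRoot : B → RealizationSpace B) :=
  (Finsupp.linearIndependent_single_one ℝ (B ⊕ B)).comp Sum.inl Sum.inl_injective

theorem linearIndependent_simpleCoroot : LinearIndependent ℝ (simpleCoroot M) := by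
  have restrict_eq : (Finsupp.lmapDomain ℝ ℝ (Sum.inr : B → B ⊕ B)).dualMap ∘ simpleCoroot M =
      Finsupp.basisSingleOne.coord := by
    ext i j
    simp [simpleCoroot, Finsupp.single_apply_left Sum.inr_injective]
  exact .of_comp _ (restrict_eq ▸ Finsupp.basisSingleOne.linearIndependent_coord)

theorem isLiftable_preReflection_simpleRoot :
    M.IsLiftable fun i ↦ preReflection (simpleRoot i) (simpleCoroot M i) := by
  intro i j
  obtain rfl | hij := eq_or_ne i j
  · rw [M.diagonal, pow_one]
    exact preReflection_mul_self (simpleCoroot_simpleRoot_self i)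
  obtain h0 | h0 := Nat.eq_zero_or_pos (M i j)
  · rw [h0, pow_zero]
  have := M.off_diagonal i j hij
  exact preReflection_mul_preReflection_pow_eq_one (simpleCoroot_simpleRoot_self i)
    (simpleCoroot_simpleRoot_self j) (by omega) (simpleCoroot_simpleRoot i j)
    (by rw [simpleCoroot_simpleRoot, M.symmetric])

variable (cs : CoxeterSystem M W)

/-- The linear action of `W` on `RealizationSpace B` in which the `i`-th simple generator acts as
the reflection given by the `i`-th simple root and coroot. -/
noncomputable def coxeterRealization : W →* End ℝ (RealizationSpace B) :=
  cs.lift ⟨_, isLiftable_preReflection_simpleRoot⟩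

theorem coxeterRealization_simple (i : B) :
    coxeterRealization cs (cs.simple i) = preReflection (simpleRoot i) (simpleCoroot M i) :=
  cs.lift_apply_simple _ i

theorem coxeterRealization_wordProd (ω : List B) :
    coxeterRealization cs (cs.wordProd ω) =
      (ω.map fun i ↦ preReflection (simpleRoot i) (simpleCoroot M i)).prod := by
  simp [CoxeterSystem.wordProd, map_list_prod, Function.comp_def, coxeterRealization_simple]

end Realization

section ReflectionLength

variable {B W : Type*} [Group W] {M : CoxeterMatrix B} (cs : CoxeterSystem M W)

theorem isReflection_of_mem_map_simple {ω : List B} {t : W} (ht : t ∈ ω.map cs.simple) :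
    cs.IsReflection t := by
  obtain ⟨i, -, rfl⟩ := List.mem_map.mp ht
  exact cs.isReflection_simple i

theorem reflLength_list_prod_le {l : List W} (hl : ∀ t ∈ l, cs.IsReflection t) :
    reflLength cs l.prod ≤ l.length :=
  Nat.sInf_le ⟨l, hl, rfl, rfl⟩

theorem exists_list_prod_eq_length_eq_reflLength (w : W) :
    ∃ l : List W, (∀ t ∈ l, cs.IsReflection t) ∧ l.prod = w ∧ l.length = reflLength cs w := by
  obtain ⟨ω, rfl⟩ := cs.wordProd_surjective w
  exact Nat.sInf_mem (s := {n | ∃ l : List W, (∀ t ∈ l, cs.IsReflection t) ∧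
    l.prod = cs.wordProd ω ∧ l.length = n})
    ⟨_, ω.map cs.simple, fun _ ↦ isReflection_of_mem_map_simple cs, rfl, rfl⟩

theorem reflLength_le_length (w : W) : reflLength cs w ≤ cs.length w := by
  obtain ⟨ω, hω, rfl⟩ := cs.exists_isReduced w
  rw [hω.eq, ← ω.length_map (f := cs.simple)]
  exact reflLength_list_prod_le cs fun _ ↦ isReflection_of_mem_map_simple cs

theorem reflLength_mul_le (u w : W) :
    reflLength cs (u * w) ≤ reflLength cs u + reflLength cs w := by
  obtain ⟨a, ha, rfl, ha_length⟩ := exists_list_prod_eq_length_eq_reflLength cs u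
  obtain ⟨b, hb, rfl, hb_length⟩ := exists_list_prod_eq_length_eq_reflLength cs w
  rw [← ha_length, ← hb_length, ← List.prod_append, ← List.length_append]
  exact reflLength_list_prod_le cs (List.forall_mem_append.mpr ⟨ha, hb⟩)

theorem reflLength_conj_le (u w : W) : reflLength cs (u * w * u⁻¹) ≤ reflLength cs w := by
  obtain ⟨l, hl, rfl, hl_length⟩ := exists_list_prod_eq_length_eq_reflLength cs w
  rw [← hl_length, ← MulAut.conj_apply, map_list_prod, ← l.length_map (f := MulAut.conj u)]
  refine reflLength_list_prod_le cs fun t ht ↦ ?_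
  obtain ⟨r, hr, rfl⟩ := List.mem_map.mp ht
  exact (hl r hr).conj u

theorem reflLength_list_prod_lt_of_not_nodup {l : List W} (hl : ∀ t ∈ l, cs.IsReflection t)
    (h : ¬l.Nodup) : reflLength cs l.prod < l.length := by
  induction l with
  | nil => simp at h
  | cons t l ih =>
    obtain ⟨ht, hl'⟩ := List.forall_mem_cons.mp hl
    by_cases htl : t ∈ l
    · obtain ⟨a, b, rfl⟩ := List.append_of_mem htl
      obtain ⟨ha, hb⟩ := List.forall_mem_append.mp hl'
      have prod_eq : (t :: (a ++ t :: b)).prod = t * a.prod * t⁻¹ * b.prod := by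
        simp [ht.inv, mul_assoc]
      calc
        reflLength cs (t :: (a ++ t :: b)).prod
          ≤ reflLength cs a.prod + reflLength cs b.prod :=
            prod_eq ▸ (reflLength_mul_le cs _ _).trans (by gcongr; exact reflLength_conj_le cs t _)
        _ ≤ a.length + b.length :=
            add_le_add (reflLength_list_prod_le cs ha)
              (reflLength_list_prod_le cs (List.forall_mem_cons.mp hb).2)
        _ < (t :: (a ++ t :: b)).length := by simp
    · have hlt := ih hl' fun hnodup ↦ h (List.nodup_cons.mpr ⟨htl, hnodup⟩)
      calc
        reflLength cs (t :: l).prod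
          ≤ reflLength cs [t].prod + reflLength cs l.prod := by
            simpa using reflLength_mul_le cs t l.prod
        _ < [t].length + l.length :=
            add_lt_add_of_le_of_lt (reflLength_list_prod_le cs (by simpa using ht)) hlt
        _ = (t :: l).length := by simp [add_comm]

section Representation

variable {K V : Type*} [DivisionRing K] [AddCommGroup V] [Module K V] {ρ : W →* End K V}

theorem rank_sub_one_le_one_of_isReflection
    (hρ : ∀ i, LinearMap.rank (ρ (cs.simple i) - 1) ≤ 1) {t : W} (ht : cs.IsReflection t) :
    LinearMap.rank (ρ t - 1) ≤ 1 := by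
  obtain ⟨w, i, rfl⟩ := ht
  have conj_sub_one :
      ρ (w * cs.simple i * w⁻¹) - 1 = ρ w ∘ₗ (ρ (cs.simple i) - 1) ∘ₗ ρ w⁻¹ := by
    rw [← End.mul_eq_comp, ← End.mul_eq_comp, sub_one_mul, mul_sub, ← map_mul, ← map_mul,
      ← map_mul, mul_inv_cancel, map_one, mul_assoc]
  calc
    LinearMap.rank (ρ (w * cs.simple i * w⁻¹) - 1)
      ≤ LinearMap.rank ((ρ (cs.simple i) - 1) ∘ₗ ρ w⁻¹) :=
        conj_sub_one ▸ LinearMap.rank_comp_le_right _ _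
    _ ≤ LinearMap.rank (ρ (cs.simple i) - 1) := LinearMap.rank_comp_le_left _ _
    _ ≤ 1 := hρ i

theorem rank_sub_one_le_reflLength (hρ : ∀ i, LinearMap.rank (ρ (cs.simple i) - 1) ≤ 1) (w : W) :
    LinearMap.rank (ρ w - 1) ≤ reflLength cs w := by
  obtain ⟨l, hl, rfl, hl_length⟩ := exists_list_prod_eq_length_eq_reflLength cs w
  rw [← hl_length, map_list_prod, ← l.length_map (f := ρ)]
  refine rank_list_prod_sub_one_le fun g hg ↦ ?_
  obtain ⟨t, ht, rfl⟩ := List.mem_map.mp hg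
  exact rank_sub_one_le_one_of_isReflection cs hρ (hl t ht)

end Representation

theorem length_le_reflLength_wordProd_of_nodup {ω : List B} (hω : ω.Nodup) :
    ω.length ≤ reflLength cs (cs.wordProd ω) := by
  have hs (i : B) : LinearMap.rank (coxeterRealization cs (cs.simple i) - 1) ≤ 1 := by
    rw [coxeterRealization_simple]
    exact rank_preReflection_sub_one_le _ _
  have h := rank_sub_one_le_reflLength cs hs (cs.wordProd ω)
  rw [coxeterRealization_wordProd, rank_list_prod_preReflection_sub_one
    linearIndependent_simpleRoot linearIndependent_simpleCoroot hω] at h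
  exact_mod_cast h

theorem reflLength_wordProd_of_nodup {ω : List B} (hω : ω.Nodup) :
    reflLength cs (cs.wordProd ω) = cs.length (cs.wordProd ω) :=
  (reflLength_le_length cs _).antisymm
    ((cs.length_wordProd_le ω).trans (length_le_reflLength_wordProd_of_nodup cs hω))

theorem nodup_map_simple_of_reflLength_eq_length {ω : List B} (hω : cs.IsReduced ω)
    (h : reflLength cs (cs.wordProd ω) = cs.length (cs.wordProd ω)) :
    (ω.map cs.simple).Nodup := by
  by_contra hn
  have hlt := reflLength_list_prod_lt_of_not_nodup cs
    (fun _ ↦ isReflection_of_mem_map_simple cs) hn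
  rw [List.length_map, ← hω.eq] at hlt
  exact hlt.ne h

end ReflectionLength

theorem standardParabolicCoxeterElement_iff_reflLength_eq_length_general
    {W : Type*} [Group W] {B : Type*} {M : CoxeterMatrix B} (cs : CoxeterSystem M W) (w : W) :
    (∃ l : List W, l.Nodup ∧ (∀ x ∈ l, x ∈ Set.range cs.simple) ∧ l.prod = w) ↔
      reflLength cs w = cs.length w := by
  constructor
  · rintro ⟨l, hl, hs, rfl⟩
    obtain ⟨ω, rfl⟩ : l ∈ Set.range (List.map cs.simple) := by rwa [Set.range_list_map]
    exact reflLength_wordProd_of_nodup cs hl.of_map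
  · intro h
    obtain ⟨ω, hω, rfl⟩ := cs.exists_isReduced w
    refine ⟨ω.map cs.simple, nodup_map_simple_of_reflLength_eq_length cs hω h, ?_, rfl⟩
    simp

/-- Let `(W,S)` be a Coxeter system of finite rank.  An element
`w ∈ W` is a standard parabolic Coxeter element (a product of pairwise distinct simple
generators, each occurring exactly once) if and only if `ℓ_T(w) = ℓ(w)`, where `ℓ` is
the length with respect to `S` and `ℓ_T` the length with respect to the reflections. -/
theorem standardParabolicCoxeterElement_iff_reflLength_eq_length
    {W : Type*} [Group W] {B : Type*} [Finite B]
    (M : CoxeterMatrix B) (cs : CoxeterSystem M W) (w : W) :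
    (∃ l : List W, l.Nodup ∧ (∀ x ∈ l, x ∈ Set.range cs.simple) ∧ l.prod = w) ↔
      reflLength cs w = cs.length w :=
  standardParabolicCoxeterElement_iff_reflLength_eq_length_general cs w
end
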